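/- arXiv:2210.06000 — 2 statements merged into one kernel-verified Lean document; each statement's English description precedes it below -/
import Mathlib

section
/- Let G be a 2-connected graph with n ≥ 3 vertices. Then for every m ≥ 3, the number of proper m-colorings of G satisfies P(G,m) ≤ (m-1)^n + (-1)^n (m-1). -/
open SimpleGraph

/-- The number of proper `m`-colorings of a graph `G`. -/
noncomputable def numColorings {V : Type} (G : SimpleGraph V) (m : ℕ) : ℕ :=
  Nat.card {c : V → Fin m // ∀ ⦃a b : V⦄, G.Adj a b → c a ≠ c b}

/-- An `m`-fold cover `(L, H)` of a graph `G`. -/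
structure DPCover {V : Type} (G : SimpleGraph V) (m : ℕ) where
  X : Type
  H : SimpleGraph X
  L : V → Set X
  partition : ∀ x : X, ∃! v : V, x ∈ L v
  fold : ∀ v : V, Nat.card (L v) = m
  cliques : ∀ v : V, ∀ x ∈ L v, ∀ y ∈ L v, x ≠ y → H.Adj x y
  cross : ∀ u v : V, ∀ x ∈ L u, ∀ y ∈ L v, H.Adj x y → u = v ∨ G.Adj u v
  matching : ∀ u v : V, G.Adj u v → ∀ x ∈ L u, ∀ y ∈ L v, ∀ z ∈ L v,
      H.Adj x y → H.Adj x z → y = z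
  matching' : ∀ u v : V, G.Adj u v → ∀ y ∈ L u, ∀ z ∈ L u, ∀ x ∈ L v,
      H.Adj y x → H.Adj z x → y = z

/-- A cover is full if for each edge `uv` of `G` the matching between `L u` and `L v`
is a perfect matching. -/
def DPCover.IsFull {V : Type} {G : SimpleGraph V} {m : ℕ} (C : DPCover G m) : Prop :=
  ∀ u v : V, G.Adj u v → ∀ x ∈ C.L u, ∃ y ∈ C.L v, C.H.Adj x y

/-- An `H`-coloring of `G`, viewed as an independent transversal of the lists. -/
def DPCover.IsColoring {V : Type} {G : SimpleGraph V} {m : ℕ} (C : DPCover G m)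
    (f : V → C.X) : Prop :=
  (∀ v : V, f v ∈ C.L v) ∧ ∀ u v : V, u ≠ v → ¬ C.H.Adj (f u) (f v)

/-- `P_DP(G, 𝓗)`, the number of `𝓗`-colorings of `G`. -/
noncomputable def DPCover.count {V : Type} {G : SimpleGraph V} {m : ℕ}
    (C : DPCover G m) : ℕ :=
  Nat.card {f : V → C.X // C.IsColoring f}

/-- The DP color function `P_DP(G, m)`. -/
noncomputable def PDP {V : Type} (G : SimpleGraph V) (m : ℕ) : ℕ :=
  sInf {n : ℕ | ∃ C : DPCover G m, C.count = n}

/-- The DP-chromatic number `χ_DP(G)`. -/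
noncomputable def chiDP {V : Type} (G : SimpleGraph V) : ℕ :=
  sInf {m : ℕ | ∀ C : DPCover G m, ∃ f : V → C.X, C.IsColoring f}

/-- A canonical labeling of an `m`-fold cover. -/
def DPCover.HasCanonicalLabeling {V : Type} {G : SimpleGraph V} {m : ℕ}
    (C : DPCover G m) : Prop :=
  ∃ φ : V × Fin m → C.X, Function.Bijective φ ∧ (∀ v j, φ (v, j) ∈ C.L v) ∧
    ∀ u v : V, G.Adj u v → ∀ j : Fin m, C.H.Adj (φ (u, j)) (φ (v, j))

/-- A graph is 2-connected if it has at least 3 vertices, is connected, and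
remains connected after deleting any single vertex. -/
def TwoConnected {V : Type} (G : SimpleGraph V) : Prop :=
  3 ≤ Nat.card V ∧ G.Connected ∧ ∀ v : V, (G.induce ({v}ᶜ : Set V)).Connected

/-!
Write `q = m - 1`. Starting from an edge, a 2-connected graph is built up by attaching open ears,
and along the way every subgraph `H` induced by the current vertex set, with `n` vertices say, has
at most `q ^ n + (-1) ^ n * q` colorings. Chords of the new vertex set only destroy colorings, so it
is enough to attach the bare ear. If the ear has length `ℓ` and ends `u ≠ v`, its extensions of a
given coloring are walks of length `ℓ` in the complete graph on the colors, so that, with `N`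
colorings of `H` in total and `E` of them giving `u` and `v` the same color, the number of colorings
after attaching the ear is
`(N * (q ^ ℓ - (-1) ^ ℓ)) / m + (-1) ^ ℓ * E`.
For odd `ℓ` the bound `0 ≤ E` suffices. For even `ℓ`, color `{u, v}` first and then the rest of `H`
vertex by vertex, each vertex adjacent to a colored one: this gives `E ≤ m * q ^ (n - 2)`, which is
at most `q ^ n - (-1) ^ n * q ^ 2` except when `n = 2`, where `u` and `v` are adjacent and `E = 0`.
-/

namespace EarDecomposition

open Finset

section Ear

variable {V : Type*} {G : SimpleGraph V}

lemma exists_adj_mem_notMem (hG : G.Preconnected) {S : Set V} (hne : S.Nonempty)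
    (huniv : S ≠ Set.univ) : ∃ u ∈ S, ∃ w ∉ S, G.Adj u w := by
  obtain ⟨s, hs⟩ := hne
  obtain ⟨t, ht⟩ := (Set.ne_univ_iff_exists_notMem S).1 huniv
  obtain ⟨p⟩ := hG s t
  obtain ⟨d, -, hfst, hsnd⟩ := p.exists_boundary_dart S hs ht
  exact ⟨d.fst, hfst, d.snd, hsnd, d.adj⟩

lemma exists_walk_avoiding {u w b : V} (h : (G.induce ({u}ᶜ : Set V)).Preconnected)
    (hw : w ≠ u) (hb : b ≠ u) : ∃ p : G.Walk w b, u ∉ p.support := by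
  obtain ⟨p⟩ := h ⟨w, hw⟩ ⟨b, hb⟩
  refine ⟨p.map (Embedding.induce _).toHom, fun hu => ?_⟩
  obtain ⟨x, -, hx⟩ := List.mem_map.1 (Walk.support_map _ p ▸ hu)
  exact x.2 hx

lemma exists_walk_to_first_mem {S : Set V} {a b : V} (p : G.Walk a b) (hb : b ∈ S) :
    ∃ v ∈ S, ∃ r : G.Walk a v, r.support ⊆ p.support ∧ ∀ x ∈ r.support, x ∈ S → x = v := by
  induction p with
  | @nil a => exact ⟨a, hb, .nil, by simp, by simp⟩
  | @cons a a' b h p ih =>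
    by_cases ha : a ∈ S
    · exact ⟨a, ha, .nil, by simp, by simp⟩
    obtain ⟨v, hv, r, hsub, hfirst⟩ := ih hb
    refine ⟨v, hv, .cons h r, ?_, ?_⟩
    · rw [Walk.support_cons, Walk.support_cons]
      exact List.cons_subset_cons a hsub
    · rw [Walk.support_cons, List.forall_mem_cons]
      exact ⟨fun haS => absurd haS ha, hfirst⟩

/-- `IsEar S p`: the path `p` is an open ear of the vertex set `S`, that is, its two ends lie in `S`
and are distinct, and its interior is nonempty and avoids `S`. The ends are distinct because `p` is
a path of positive length. -/
structure IsEar (S : Set V) {u v : V} (p : G.Walk u v) : Prop where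
  isPath : p.IsPath
  two_le_length : 2 ≤ p.length
  start_mem : u ∈ S
  end_mem : v ∈ S
  eq_or_eq_of_mem : ∀ x ∈ p.support, x ∈ S → x = u ∨ x = v

namespace IsEar

variable {S : Set V} {u v : V} {p : G.Walk u v}

lemma ne (h : IsEar S p) : u ≠ v := by
  rintro rfl
  have := h.two_le_length
  simp [Walk.length_eq_zero_iff.2 (Walk.isPath_iff_nil.1 h.isPath)] at this

lemma inter_support (h : IsEar S p) : S ∩ {x | x ∈ p.support} = {u, v} := by
  refine Set.Subset.antisymm (fun x hx => h.eq_or_eq_of_mem x hx.2 hx.1) ?_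
  rintro x (rfl | rfl)
  · exact ⟨h.start_mem, p.start_mem_support⟩
  · exact ⟨h.end_mem, p.end_mem_support⟩

lemma ncard_union_support [Finite V] (h : IsEar S p) :
    (S ∪ {x | x ∈ p.support}).ncard + 1 = S.ncard + p.length := by
  classical
  have hsupport : {x | x ∈ p.support}.ncard = p.length + 1 := by
    rw [← List.coe_toFinset, Set.ncard_coe_finset,
      List.toFinset_card_of_nodup h.isPath.support_nodup, Walk.length_support]
  have hunion := Set.ncard_union_add_ncard_inter S {x | x ∈ p.support}
  rw [h.inter_support, Set.ncard_pair h.ne, hsupport] at hunion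
  lia

lemma connected_induce_union (h : IsEar S p) (hS : (G.induce S).Connected) :
    (G.induce (S ∪ {x | x ∈ p.support})).Connected :=
  induce_union_connected hS.preconnected p.connected_induce_support.preconnected
    ⟨u, h.start_mem, p.start_mem_support⟩

end IsEar

end Ear

section EarInduction

variable {V : Type} {G : SimpleGraph V}

lemma finite_of_twoConnected (hG : TwoConnected G) : Finite V :=
  Nat.finite_of_card_ne_zero (three_pos.trans_le hG.1).ne'

lemma exists_isEar (hG : TwoConnected G) {S : Set V} (hS : S.Nontrivial)
    (huniv : S ≠ Set.univ) : ∃ (u v : V) (p : G.Walk u v), IsEar S p := by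
  classical
  obtain ⟨u, hu, w, hw, huw⟩ := exists_adj_mem_notMem hG.2.1.preconnected hS.nonempty huniv
  obtain ⟨b, hb, hbu⟩ := hS.exists_ne u
  obtain ⟨p, hup⟩ := exists_walk_avoiding (hG.2.2 u).preconnected huw.ne' hbu
  obtain ⟨v, hv, r, hrp, hfirst⟩ := exists_walk_to_first_mem p hb
  have hbypass : r.bypass.support ⊆ r.support := r.support_bypass_subset_support
  refine ⟨u, v, .cons huw r.bypass, ?_, ?_, hu, hv, ?_⟩
  · exact r.bypass_isPath.cons fun h => hup (hrp (hbypass h))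
  · have : r.bypass.length ≠ 0 := fun h => hw (Walk.eq_of_length_eq_zero h ▸ hv)
    rw [Walk.length_cons]
    lia
  · rw [Walk.support_cons, List.forall_mem_cons]
    exact ⟨fun _ => .inl rfl, fun x hx hxS => .inr (hfirst x (hbypass hx) hxS)⟩

theorem ear_induction (hG : TwoConnected G) {P : Set V → Prop}
    (edge : ∀ ⦃u v⦄, G.Adj u v → P {u, v})
    (ear : ∀ ⦃S⦄, (G.induce S).Connected → P S → ∀ ⦃u v⦄ (p : G.Walk u v), IsEar S p →
      P (S ∪ {x | x ∈ p.support})) :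
    P Set.univ := by
  have : Finite V := finite_of_twoConnected hG
  have : Nontrivial V := Finite.one_lt_card_iff_nontrivial.1 (one_lt_two.trans hG.1)
  let grown : Set (Set V) := {S | (G.induce S).Connected ∧ S.Nontrivial ∧ P S}
  have hgrown : grown.Nonempty := by
    obtain ⟨u⟩ := hG.2.1.nonempty
    obtain ⟨v, huv⟩ := hG.2.1.preconnected.exists_adj_of_nontrivial u
    exact ⟨{u, v}, induce_pair_connected_of_adj huv, Set.nontrivial_pair huv.ne, edge huv⟩
  obtain ⟨S, ⟨hconn, hnt, hP⟩, hmax⟩ := grown.toFinite.exists_maximal hgrown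
  by_cases huniv : S = Set.univ
  · exact huniv ▸ hP
  obtain ⟨u, v, p, hp⟩ := exists_isEar hG hnt huniv
  have hle := Set.ncard_le_ncard <| hmax
    ⟨hp.connected_induce_union hconn, hnt.mono Set.subset_union_left, ear hconn hP p hp⟩
    Set.subset_union_left
  have := hp.ncard_union_support
  have := hp.two_le_length
  lia

end EarInduction

section Extension

variable {V α : Type*}

lemma sum_comp_le_sum_of_injective {ι κ : Type*} [Fintype ι] {e : ι → κ}
    (he : Function.Injective e) {t : Finset κ} (ht : ∀ i, e i ∈ t) (g : κ → ℕ) :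
    ∑ i, g (e i) ≤ ∑ j ∈ t, g j := by
  refine (sum_map univ ⟨e, he⟩ g).ge.trans (sum_le_sum_of_subset fun _ hj => ?_)
  obtain ⟨i, -, rfl⟩ := mem_map.1 hj
  exact ht i

variable [Fintype α] {G : SimpleGraph V} {S : Set V}

lemma sum_coloring_insert_le [DecidableEq α] {w : V} [Fintype S] [Fintype ↥(insert w S)] {u : S}
    (huw : G.Adj u w) (f : (G.induce S).Coloring α → α → ℕ) :
    ∑ c : (G.induce (insert w S)).Coloring α,
        f (c.comap (G.induceHomOfLE (Set.subset_insert w S)).toHom) (c ⟨w, Set.mem_insert w S⟩) ≤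
      ∑ c : (G.induce S).Coloring α, ∑ x ∈ univ.erase (c u), f c x := by
  let incl := (G.induceHomOfLE (Set.subset_insert w S)).toHom
  let split (c : (G.induce (insert w S)).Coloring α) : Σ _ : (G.induce S).Coloring α, α :=
    ⟨c.comap incl, c ⟨w, Set.mem_insert w S⟩⟩
  have hinj : Function.Injective split := fun c d hcd => by
    obtain ⟨hS, hw⟩ := Sigma.mk.inj hcd
    ext ⟨x, rfl | hx⟩
    · exact eq_of_heq hw
    · exact DFunLike.congr_fun hS ⟨x, hx⟩
  rw [sum_sigma']
  refine sum_comp_le_sum_of_injective hinj (fun c => ?_) fun z => f z.1 z.2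
  have hne : c (incl u) ≠ c ⟨w, Set.mem_insert w S⟩ := c.valid huw
  simpa [split] using hne.symm

lemma sum_coloring_le_pow_mul_sum_induce [Fintype V] [Fintype S] (hG : G.Preconnected)
    (hS : S.Nonempty) (f : (G.induce S).Coloring α → ℕ) :
    ∑ c : G.Coloring α, f (c.comap (Embedding.induce S).toHom) ≤
      (Fintype.card α - 1) ^ Sᶜ.ncard * ∑ c : (G.induce S).Coloring α, f c := by
  classical
  induction hn : Sᶜ.ncard generalizing S with
  | zero =>
    have huniv (x : V) : x ∈ S := by simpa using Set.ext_iff.1 ((Set.ncard_eq_zero).1 hn) x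
    rw [pow_zero, one_mul]
    refine sum_comp_le_sum_of_injective (fun c d hcd => ?_) (fun _ => mem_univ _) f
    ext x
    exact DFunLike.congr_fun hcd ⟨x, huniv x⟩
  | succ n ih =>
    have huniv : S ≠ Set.univ := by rintro rfl; simp at hn
    obtain ⟨u, hu, w, hw, huw⟩ := exists_adj_mem_notMem hG hS huniv
    have : Fintype ↥(insert w S) := .ofFinite _
    let incl := (G.induceHomOfLE (Set.subset_insert w S)).toHom
    have hcard : (insert w S)ᶜ.ncard = n := by
      have hcompl := Set.ncard_add_ncard_compl S
      have hcompl_insert := Set.ncard_add_ncard_compl (insert w S)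
      rw [Set.ncard_insert_of_notMem hw] at hcompl_insert
      lia
    calc ∑ c : G.Coloring α, f (c.comap (Embedding.induce S).toHom)
        ≤ (Fintype.card α - 1) ^ n * ∑ c : (G.induce (insert w S)).Coloring α, f (c.comap incl) :=
          ih (Set.insert_nonempty w S) (fun c => f (c.comap incl)) hcard
      _ ≤ (Fintype.card α - 1) ^ n *
            ∑ c : (G.induce S).Coloring α, ∑ _x ∈ univ.erase (c ⟨u, hu⟩), f c :=
          Nat.mul_le_mul_left _ (sum_coloring_insert_le huw fun c _ => f c)
      _ = (Fintype.card α - 1) ^ (n + 1) * ∑ c : (G.induce S).Coloring α, f c := by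
          simp only [sum_const, card_erase_of_mem (mem_univ _), card_univ, smul_eq_mul, ← mul_sum]
          ring

end Extension

section EarCount

variable {V : Type*} [Fintype V] {α : Type*} [Fintype α] [DecidableEq α]

lemma adjMatrix_top_pow_succ_apply (k : ℕ) (a b : α) :
    ((⊤ : SimpleGraph α).adjMatrix ℕ ^ (k + 1)) a b =
      ∑ x ∈ univ.erase a, ((⊤ : SimpleGraph α).adjMatrix ℕ ^ k) x b := by
  rw [pow_succ', adjMatrix_mul_apply]
  refine sum_congr ?_ fun _ _ => rfl
  ext x
  simp [eq_comm]

lemma card_mul_adjMatrix_top_pow_apply (k : ℕ) (a b : α) :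
    (Fintype.card α : ℤ) * (((⊤ : SimpleGraph α).adjMatrix ℕ ^ k) a b : ℕ) =
      ((Fintype.card α : ℤ) - 1) ^ k - (-1) ^ k +
        (-1) ^ k * Fintype.card α * (if a = b then 1 else 0) := by
  induction k generalizing a with
  | zero => simp [Matrix.one_apply]
  | succ k ih =>
    have hcard : ((univ.erase a).card : ℤ) = Fintype.card α - 1 := by
      rw [card_erase_of_mem (mem_univ a), card_univ, Nat.cast_pred (Fintype.card_pos_iff.2 ⟨a⟩)]
    have hdelta : ∑ x ∈ univ.erase a, (if x = b then (1 : ℤ) else 0) =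
        1 - if a = b then 1 else 0 := by
      simp [sum_erase_eq_sub (mem_univ a)]
    rw [adjMatrix_top_pow_succ_apply, Nat.cast_sum, mul_sum, sum_congr rfl fun x _ => ih x,
      sum_add_distrib, sum_const, ← mul_sum, hdelta, nsmul_eq_mul, hcard]
    ring

/-- The number of proper `α`-colorings of the graph obtained from `H` by attaching a new path of
length `k` between `u` and `v`; for `k = 0` the vertices `u` and `v` are identified. A coloring of
the path is encoded as a walk of length `k` in the complete graph on `α`, so that an entry of the
`k`-th power of its adjacency matrix counts the colorings with prescribed ends. -/
noncomputable def earCount (H : SimpleGraph V) (α : Type*) [Fintype α] [DecidableEq α] (k : ℕ)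
    (u v : V) : ℕ :=
  ∑ c : H.Coloring α, ((⊤ : SimpleGraph α).adjMatrix ℕ ^ k) (c u) (c v)

lemma earCount_zero (H : SimpleGraph V) (u v : V) :
    earCount H α 0 u v = #{c : H.Coloring α | c u = c v} := by
  simp [earCount, Matrix.one_apply]

lemma earCount_zero_self (H : SimpleGraph V) (u : V) :
    earCount H α 0 u u = Nat.card (H.Coloring α) := by
  simp [earCount_zero, Nat.card_eq_fintype_card]

lemma card_mul_earCount (H : SimpleGraph V) (k : ℕ) (u v : V) :
    (Fintype.card α : ℤ) * earCount H α k u v =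
      Nat.card (H.Coloring α) * (((Fintype.card α : ℤ) - 1) ^ k - (-1) ^ k) +
        (-1) ^ k * Fintype.card α * earCount H α 0 u v := by
  rw [earCount, Nat.cast_sum, mul_sum, sum_congr rfl fun c _ =>
    card_mul_adjMatrix_top_pow_apply k (c u) (c v), sum_add_distrib, sum_const, ← mul_sum,
    earCount_zero, card_univ, Nat.card_eq_fintype_card, nsmul_eq_mul, card_filter]
  push_cast
  rfl

lemma earCount_insert_le {W : Type*} {G : SimpleGraph W} {S : Set W} {w : W} [Fintype S]
    [Fintype ↥(insert w S)] {u : S} (huw : G.Adj u w) (k : ℕ) (v : S) :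
    earCount (G.induce (insert w S)) α k ⟨w, Set.mem_insert w S⟩
      (Set.inclusion (Set.subset_insert w S) v) ≤ earCount (G.induce S) α (k + 1) u v := by
  simp only [earCount, adjMatrix_top_pow_succ_apply]
  exact sum_coloring_insert_le huw fun c x => ((⊤ : SimpleGraph α).adjMatrix ℕ ^ k) x (c v)

lemma card_coloring_union_support_le_earCount {W : Type*} {G : SimpleGraph W} {u v : W}
    (p : G.Walk u v) {S : Set W} [Fintype S] (hu : u ∈ S) (hv : v ∈ S) :
    Nat.card ((G.induce (S ∪ {x | x ∈ p.support})).Coloring α) ≤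
      earCount (G.induce S) α p.length ⟨u, hu⟩ ⟨v, hv⟩ := by
  induction p generalizing S with
  | nil =>
    rw [Walk.length_nil, earCount_zero_self, Set.union_eq_left.2 (by simpa using hu)]
  | @cons u w v huw p ih =>
    have hunion : S ∪ {x | x ∈ (Walk.cons huw p).support} =
        insert w S ∪ {x | x ∈ p.support} := by
      ext x
      have := p.start_mem_support
      simp only [Walk.support_cons, List.mem_cons, Set.mem_union, Set.mem_ofPred_eq,
        Set.mem_insert_iff]
      grind
    have : Fintype ↥(insert w S) := .ofFinite _
    rw [hunion, Walk.length_cons]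
    exact (ih (Set.mem_insert w S) (Set.mem_insert_of_mem w hv)).trans
      (earCount_insert_le (u := ⟨u, hu⟩) huw p.length ⟨v, hv⟩)

end EarCount

section CycleCount

/-- The value at `q + 1` of the chromatic polynomial of the cycle on `n` vertices. -/
def cycleCount (q : ℤ) (n : ℕ) : ℤ :=
  q ^ n + (-1) ^ n * q

lemma add_one_mul_cycleCount (q : ℤ) (n k : ℕ) :
    (q + 1) * cycleCount q (n + k + 1) =
      cycleCount q n * (q ^ (k + 2) - (-1) ^ (k + 2)) +
        (q ^ n - (-1) ^ n * q ^ 2) * (q ^ (k + 1) + (-1) ^ k) := by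
  rw [cycleCount, cycleCount]
  ring

lemma add_one_mul_pow_le {q : ℤ} (hq : 2 ≤ q) {n : ℕ} (hn : 3 ≤ n) :
    (q + 1) * q ^ (n - 2) ≤ q ^ n - (-1) ^ n * q ^ 2 := by
  obtain ⟨j, rfl⟩ := Nat.exists_eq_add_of_le hn
  have hexp : 3 + j - 2 = j + 1 := by lia
  rw [hexp]
  obtain rfl | hj := j.eq_zero_or_pos
  · norm_num
    nlinarith
  · have hpow : q ^ 2 ≤ q ^ (j + 1) := pow_le_pow_right₀ (by linarith) (by lia)
    have hsign : (-1 : ℤ) ^ (3 + j) * q ^ 2 ≤ q ^ 2 := by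
      rcases neg_one_pow_eq_or ℤ (3 + j) with h | h <;> rw [h] <;> nlinarith
    have : q ^ (3 + j) = q ^ 2 * q ^ (j + 1) := by ring
    nlinarith [mul_nonneg (pow_nonneg (by linarith : 0 ≤ q) (j + 1))
      (mul_nonneg (by linarith : 0 ≤ q - 2) (by linarith : 0 ≤ q + 1))]

lemma ear_excess_le {q : ℤ} (hq : 2 ≤ q) {n : ℕ} (k : ℕ) {e : ℤ} (he₀ : 0 ≤ e)
    (he : e ≤ q ^ n - (-1) ^ n * q ^ 2) :
    (-1) ^ k * (q + 1) * e ≤ (q ^ n - (-1) ^ n * q ^ 2) * (q ^ (k + 1) + (-1) ^ k) := by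
  have hpow : q ≤ q ^ (k + 1) := le_self_pow₀ (by linarith) (by lia)
  rcases neg_one_pow_eq_or ℤ k with h | h <;> rw [h] <;> nlinarith

lemma le_add_one_mul_cycleCount {q : ℤ} (hq : 2 ≤ q) {n : ℕ} (k : ℕ) {N e : ℤ}
    (hN : N ≤ cycleCount q n) (he₀ : 0 ≤ e) (he : e ≤ q ^ n - (-1) ^ n * q ^ 2) :
    N * (q ^ (k + 2) - (-1) ^ (k + 2)) + (-1) ^ k * (q + 1) * e ≤
      (q + 1) * cycleCount q (n + k + 1) := by
  have hsign : (-1) ^ (k + 2) ≤ q ^ (k + 2) :=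
    (abs_le.1 (abs_neg_one_pow (k + 2)).le).2.trans (one_le_pow₀ (by linarith))
  rw [add_one_mul_cycleCount]
  exact add_le_add (mul_le_mul_of_nonneg_right hN (sub_nonneg.2 hsign)) (ear_excess_le hq k he₀ he)

end CycleCount

section Bounds

variable {V α : Type*} [Fintype α]

lemma card_coloring_le_of_preconnected [Finite V] {G : SimpleGraph V} (hG : G.Preconnected)
    (u : V) :
    Nat.card (G.Coloring α) ≤ Fintype.card α * (Fintype.card α - 1) ^ (Nat.card V - 1) := by
  have : Fintype V := .ofFinite _
  have : Fintype ({u} : Set V) := .ofFinite _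
  have hvertex : Fintype.card ((G.induce ({u} : Set V)).Coloring α) ≤ Fintype.card α := by
    refine Fintype.card_le_of_injective (fun c => c ⟨u, rfl⟩) fun c d hcd => ?_
    ext ⟨x, rfl⟩
    exact hcd
  have hsum := sum_coloring_le_pow_mul_sum_induce (α := α) hG (Set.singleton_nonempty u) fun _ => 1
  rw [Set.ncard_compl, Set.ncard_singleton] at hsum
  simp only [sum_const, card_univ, smul_eq_mul, mul_one] at hsum
  rw [Nat.card_eq_fintype_card, mul_comm]
  exact hsum.trans (Nat.mul_le_mul_left _ hvertex)

lemma earCount_zero_le_of_preconnected [Fintype V] [DecidableEq α] {G : SimpleGraph V}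
    (hG : G.Preconnected) {u v : V} (huv : u ≠ v) :
    earCount G α 0 u v ≤ Fintype.card α * (Fintype.card α - 1) ^ (Nat.card V - 2) := by
  have : Fintype ({u, v} : Set V) := .ofFinite _
  let u' : ({u, v} : Set V) := ⟨u, by simp⟩
  let v' : ({u, v} : Set V) := ⟨v, by simp⟩
  have hpair : #{c : (G.induce ({u, v} : Set V)).Coloring α | c u' = c v'} ≤ Fintype.card α := by
    refine card_le_card_of_injOn (fun c => c u') (fun _ _ => mem_univ _) fun c hc d hd hcd => ?_
    have hc : c u' = c v' := by simpa using hc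
    have hd : d u' = d v' := by simpa using hd
    ext ⟨x, rfl | rfl⟩
    exacts [hcd, hc.symm.trans (hcd.trans hd)]
  have hsum := sum_coloring_le_pow_mul_sum_induce hG ⟨u, Set.mem_insert u {v}⟩
    fun c : (G.induce ({u, v} : Set V)).Coloring α => if c u' = c v' then 1 else 0
  rw [Set.ncard_compl, Set.ncard_pair huv, ← card_filter, ← card_filter] at hsum
  rw [earCount_zero, mul_comm]
  exact hsum.trans (Nat.mul_le_mul_left _ hpair)

lemma earCount_zero_eq_zero_of_adj [Fintype V] [DecidableEq α] {G : SimpleGraph V} {u v : V}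
    (huv : G.Adj u v) : earCount G α 0 u v = 0 := by
  rw [earCount_zero, card_filter_eq_zero_iff]
  exact fun c _ => c.valid huv

lemma adj_of_preconnected_of_card_eq_two [Finite V] {G : SimpleGraph V} (hG : G.Preconnected)
    (hcard : Nat.card V = 2) {u v : V} (huv : u ≠ v) : G.Adj u v := by
  have : Nontrivial V := ⟨u, v, huv⟩
  obtain ⟨w, huw⟩ := hG.exists_adj_of_nontrivial u
  have hpair : ({u, v} : Set V) = Set.univ :=
    Set.eq_of_subset_of_ncard_le (Set.subset_univ _)
      (by rw [Set.ncard_univ, Set.ncard_pair huv, hcard])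
  have hw : w ∈ ({u, v} : Set V) := hpair ▸ Set.mem_univ w
  rcases hw with rfl | rfl
  exacts [absurd rfl huw.ne, huw]

lemma earCount_zero_le [Fintype V] [DecidableEq α] {G : SimpleGraph V} (hG : G.Preconnected)
    {u v : V} (huv : u ≠ v) (hα : 3 ≤ Fintype.card α) :
    (earCount G α 0 u v : ℤ) ≤ ((Fintype.card α : ℤ) - 1) ^ Nat.card V -
      (-1) ^ Nat.card V * ((Fintype.card α : ℤ) - 1) ^ 2 := by
  have : Nontrivial V := ⟨u, v, huv⟩
  obtain hcard | hcard : Nat.card V = 2 ∨ 3 ≤ Nat.card V := by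
    have := Finite.one_lt_card (α := V)
    lia
  · rw [earCount_zero_eq_zero_of_adj (adj_of_preconnected_of_card_eq_two hG hcard huv), hcard]
    simp
  · have hle := earCount_zero_le_of_preconnected (α := α) hG huv
    zify [show 1 ≤ Fintype.card α by lia] at hle
    refine hle.trans ?_
    simpa using add_one_mul_pow_le (q := (Fintype.card α : ℤ) - 1) (by lia) hcard

lemma card_coloring_induce_pair_le_cycleCount {G : SimpleGraph V} {u v : V} (huv : G.Adj u v)
    (hα : 1 ≤ Fintype.card α) :
    (Nat.card ((G.induce ({u, v} : Set V)).Coloring α) : ℤ) ≤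
      cycleCount ((Fintype.card α : ℤ) - 1) ({u, v} : Set V).ncard := by
  have : Fintype ({u, v} : Set V) := .ofFinite _
  have hle := card_coloring_le_of_preconnected (α := α)
    (induce_pair_connected_of_adj huv).preconnected ⟨u, Set.mem_insert u {v}⟩
  rw [Nat.card_coe_set_eq, Set.ncard_pair huv.ne] at hle
  zify [hα] at hle
  refine hle.trans_eq ?_
  rw [Set.ncard_pair huv.ne, cycleCount]
  ring

lemma card_coloring_union_support_le_cycleCount [Finite V] {G : SimpleGraph V} {S : Set V}
    {u v : V} {p : G.Walk u v} (hp : IsEar S p) (hS : (G.induce S).Preconnected)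
    (hα : 3 ≤ Fintype.card α) (hle : (Nat.card ((G.induce S).Coloring α) : ℤ) ≤
      cycleCount ((Fintype.card α : ℤ) - 1) S.ncard) :
    (Nat.card ((G.induce (S ∪ {x | x ∈ p.support})).Coloring α) : ℤ) ≤
      cycleCount ((Fintype.card α : ℤ) - 1) (S ∪ {x | x ∈ p.support}).ncard := by
  classical
  have : Fintype S := .ofFinite _
  obtain ⟨q, hq⟩ : ∃ q : ℤ, (Fintype.card α : ℤ) = q + 1 := ⟨_, (sub_add_cancel _ 1).symm⟩
  obtain ⟨k, hk⟩ := Nat.exists_eq_add_of_le' hp.two_le_length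
  have hncard : (S ∪ {x | x ∈ p.support}).ncard = S.ncard + k + 1 := by
    have := hp.ncard_union_support
    lia
  let H := G.induce S
  let u' : S := ⟨u, hp.start_mem⟩
  let v' : S := ⟨v, hp.end_mem⟩
  have hear : Nat.card ((G.induce (S ∪ {x | x ∈ p.support})).Coloring α) ≤
      earCount H α (k + 2) u' v' :=
    hk ▸ card_coloring_union_support_le_earCount p hp.start_mem hp.end_mem
  have hsame := earCount_zero_le hS (u := u') (v := v') (by simpa [u', v'] using hp.ne) hα
  have hcount := card_mul_earCount (α := α) H (k + 2) u' v'
  rw [hq, add_sub_cancel_right] at hle hcount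
  rw [hq, add_sub_cancel_right, Nat.card_coe_set_eq] at hsame
  rw [hq, add_sub_cancel_right, hncard]
  refine le_of_mul_le_mul_left ?_ (by lia : 0 < q + 1)
  calc (q + 1) * (Nat.card ((G.induce (S ∪ {x | x ∈ p.support})).Coloring α) : ℤ)
      ≤ (q + 1) * earCount H α (k + 2) u' v' :=
        mul_le_mul_of_nonneg_left (mod_cast hear) (by lia)
    _ = Nat.card (H.Coloring α) * (q ^ (k + 2) - (-1) ^ (k + 2)) +
          (-1) ^ k * (q + 1) * earCount H α 0 u' v' := by
        rw [hcount]
        ring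
    _ ≤ (q + 1) * cycleCount q (S.ncard + k + 1) :=
        le_add_one_mul_cycleCount (by lia) k hle (Int.natCast_nonneg _) hsame

theorem card_coloring_le_cycleCount {V : Type} {G : SimpleGraph V} (hG : TwoConnected G)
    (hα : 3 ≤ Fintype.card α) :
    (Nat.card (G.Coloring α) : ℤ) ≤ cycleCount ((Fintype.card α : ℤ) - 1) (Nat.card V) := by
  have : Finite V := finite_of_twoConnected hG
  have huniv : (Nat.card ((G.induce Set.univ).Coloring α) : ℤ) ≤
      cycleCount ((Fintype.card α : ℤ) - 1) (Set.univ : Set V).ncard :=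
    ear_induction hG (P := fun S => (Nat.card ((G.induce S).Coloring α) : ℤ) ≤
        cycleCount ((Fintype.card α : ℤ) - 1) S.ncard)
      (fun u v huv => card_coloring_induce_pair_le_cycleCount huv (by lia))
      fun S hS hle u v p hp => card_coloring_union_support_le_cycleCount hp hS.preconnected hα hle
  have hcongr : Nat.card ((G.induce Set.univ).Coloring α) = Nat.card (G.Coloring α) :=
    Nat.card_congr (coloringCongr (induceUnivIso G) (.refl α))
  rwa [hcongr, Set.ncard_univ] at huniv

end Bounds

lemma numColorings_eq_card_coloring {V : Type} (G : SimpleGraph V) (m : ℕ) :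
    numColorings G m = Nat.card (G.Coloring (Fin m)) :=
  Nat.card_congr
    { toFun c := Coloring.mk c.1 fun h => c.2 h
      invFun c := ⟨c, fun _ _ h => c.valid h⟩ }

end EarDecomposition

theorem stmt_5 {V : Type} [Fintype V] (G : SimpleGraph V) (hG : TwoConnected G)
    (n : ℕ) (hn : Fintype.card V = n) (hn3 : 3 ≤ n) (m : ℕ) (hm : 3 ≤ m) :
    (numColorings G m : ℤ) ≤ ((m : ℤ) - 1) ^ n + (-1 : ℤ) ^ n * ((m : ℤ) - 1) := by
  subst hn
  simpa [EarDecomposition.numColorings_eq_card_coloring, EarDecomposition.cycleCount] using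
    EarDecomposition.card_coloring_le_cycleCount hG (α := Fin m) (by simpa using hm)
end

section
/- Let G be a connected graph with n vertices. Then for all m ∈ ℕ, P_DP(G,m) ≤ m(m-1)^{n-1}, with equality for m ≥ 2 if and only if G is a tree. -/
open SimpleGraph

/-! Color the list of each vertex by an abelian group `A` of order `m`, label every edge `e` by
`σ e : A`, and let the colors `a`, `b` at the ends of `e` conflict when `a + b = σ e`. For a fixed
map `V → A`, each edge rules out exactly one value of its label, so a uniformly random `σ` gives
`m ^ |V| * ((m - 1) / m) ^ |E|` colorings on average and some `σ` gives at most that many. A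
connected graph has `|E| ≥ n - 1`, with equality exactly for trees, so this is at most
`m * (m - 1) ^ (n - 1)`, and strictly less when `G` has a cycle and `m ≥ 2`.

Conversely, in any cover a coloring of `G - v` extends to `v` in at least `m - deg v` ways, each
neighbor of `v` forbidding at most one color; removing the leaves of a tree one by one bounds the
number of its colorings below by `m * (m - 1) ^ (n - 1)`. -/

theorem natCard_forall_ne {ι α : Type*} [Finite ι] [Finite α] (t : ι → α) :
    Nat.card {s : ι → α // ∀ i, s i ≠ t i} = (Nat.card α - 1) ^ Nat.card ι := by
  have := Fintype.ofFinite ι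
  have hfactor (i) : Nat.card {a // a ≠ t i} = Nat.card α - 1 := by
    rw [← Set.ncard_singleton (t i), ← Set.ncard_compl]
    rfl
  calc Nat.card {s : ι → α // ∀ i, s i ≠ t i}
      = Nat.card (∀ i, {a // a ≠ t i}) :=
        Nat.card_congr (Equiv.subtypePiEquivPi (p := fun i a => a ≠ t i))
    _ = (Nat.card α - 1) ^ Nat.card ι := by
        rw [Nat.card_pi, Finset.prod_congr rfl fun i _ => hfactor i, Finset.prod_const,
          Finset.card_univ, Nat.card_eq_fintype_card (α := ι)]

namespace DPCover

section Restriction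

variable {V : Type} {G : SimpleGraph V} {m : ℕ} (C : DPCover G m)

/-- The restriction of a cover to the subgraph induced on `s`: only the lists of the vertices in
`s` are kept. -/
def induce (s : Set V) : DPCover (G.induce s) m where
  X := {x : C.X // ∃ v : s, x ∈ C.L v}
  H := C.H.comap Subtype.val
  L v := {x | x.1 ∈ C.L v}
  partition := by
    rintro ⟨x, v, hv⟩
    exact ⟨v, hv, fun w hw => Subtype.ext ((C.partition x).unique hw hv)⟩
  fold v := (Nat.card_preimage_of_injective Subtype.val_injective
    fun x hx => ⟨⟨x, v, hx⟩, rfl⟩).trans (C.fold v)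
  cliques v x hx y hy hxy := C.cliques v x hx y hy (Subtype.val_injective.ne hxy)
  cross u v x hx y hy hxy := (C.cross u v x hx y hy hxy).imp_left Subtype.ext
  matching u v huv x hx y hy z hz hxy hxz :=
    Subtype.ext (C.matching u v huv x hx y hy z hz hxy hxz)
  matching' u v huv y hy z hz x hx hyx hzx :=
    Subtype.ext (C.matching' u v huv y hy z hz x hx hyx hzx)

/-- The colors in the list of `v` that conflict with the coloring `g` of the other vertices. -/
def blockedColors (v : V) (g : ({v}ᶜ : Set V) → C.X) : Set C.X :=
  {x ∈ C.L v | ∃ u, C.H.Adj (g u) x}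

theorem finite_list [NeZero m] (v : V) : (C.L v).Finite :=
  Nat.finite_of_card_ne_zero (by rw [C.fold v]; exact NeZero.ne m)

theorem finite_colors [Finite V] [NeZero m] : Finite C.X := by
  have hcover : ⋃ v, C.L v = Set.univ :=
    Set.eq_univ_of_forall fun x => Set.mem_iUnion.2 (C.partition x).exists
  exact Set.finite_univ_iff.1 (hcover ▸ Set.finite_iUnion C.finite_list)

theorem ncard_blockedColors_le_degree {v : V} [Fintype (G.neighborSet v)]
    {g : ({v}ᶜ : Set V) → C.X} (hg : ∀ u : ({v}ᶜ : Set V), g u ∈ C.L u) :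
    (C.blockedColors v g).ncard ≤ G.degree v := by
  choose w hw using fun x : C.blockedColors v g => x.2.2
  have hadj (x) : G.Adj (w x) v := (C.cross _ _ _ (hg _) _ x.2.1 (hw x)).resolve_left (w x).2
  rw [← G.card_neighborSet_eq_degree, ← Nat.card_eq_fintype_card, ← Nat.card_coe_set_eq]
  refine Nat.card_le_card_of_injective
    (fun x => (⟨w x, (hadj x).symm⟩ : G.neighborSet v)) fun x y hxy => Subtype.ext ?_
  have hwxy : w x = w y := Subtype.ext (congrArg (fun u : G.neighborSet v => u.1) hxy)
  exact C.matching _ _ (hadj x) _ (hg _) _ x.2.1 _ y.2.1 (hw x) (hwxy ▸ hw y)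

theorem sub_degree_le_ncard_diff_blockedColors [NeZero m] {v : V} [Fintype (G.neighborSet v)]
    {g : ({v}ᶜ : Set V) → C.X} (hg : ∀ u : ({v}ᶜ : Set V), g u ∈ C.L u) :
    m - G.degree v ≤ (C.L v \ C.blockedColors v g).ncard :=
  calc m - G.degree v
      ≤ m - (C.blockedColors v g).ncard :=
        Nat.sub_le_sub_left (C.ncard_blockedColors_le_degree hg) m
    _ = (C.L v).ncard - (C.blockedColors v g).ncard :=
        congrArg (· - _) (C.fold v).symm
    _ ≤ (C.L v \ C.blockedColors v g).ncard :=
        Set.le_ncard_sdiff _ _ ((C.finite_list v).subset (Set.sep_subset _ _))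

open Classical in
/-- The map `V → C.X` that agrees with `g` off `v` and sends `v` to `x`. -/
noncomputable def extend {v : V} (g : ({v}ᶜ : Set V) → C.X) (x : C.X) (u : V) : C.X :=
  if h : u = v then x else g ⟨u, h⟩

theorem extend_self {v : V} (g : ({v}ᶜ : Set V) → C.X) (x : C.X) : C.extend g x v = x :=
  dif_pos rfl

theorem extend_of_ne {u v : V} (g : ({v}ᶜ : Set V) → C.X) (x : C.X) (h : u ≠ v) :
    C.extend g x u = g ⟨u, h⟩ :=
  dif_neg h

theorem isColoring_extend {v : V} {g : ({v}ᶜ : Set V) → (C.induce {v}ᶜ).X}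
    (hg : (C.induce {v}ᶜ).IsColoring g) {x : C.X}
    (hx : x ∈ C.L v \ C.blockedColors v fun u => (g u).1) :
    C.IsColoring (C.extend (fun u => (g u).1) x) := by
  have hfree (u) : ¬ C.H.Adj (g u).1 x := fun h => hx.2 ⟨hx.1, u, h⟩
  refine ⟨fun u => ?_, fun u w huw => ?_⟩
  · obtain rfl | hu := eq_or_ne u v
    · rw [extend_self]
      exact hx.1
    · rw [extend_of_ne _ _ _ hu]
      exact hg.1 ⟨u, hu⟩
  · obtain rfl | hu := eq_or_ne u v
    · rw [extend_self, extend_of_ne _ _ _ huw.symm, C.H.adj_comm]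
      exact hfree _
    · rw [extend_of_ne _ _ _ hu]
      obtain rfl | hw := eq_or_ne w v
      · rw [extend_self]
        exact hfree _
      · rw [extend_of_ne _ _ _ hw]
        exact hg.2 ⟨u, hu⟩ ⟨w, hw⟩ fun h => huw (congrArg Subtype.val h)

theorem count_induce_compl_mul_le_count [Finite V] (v : V) [Fintype (G.neighborSet v)] :
    (C.induce {v}ᶜ).count * (m - G.degree v) ≤ C.count := by
  obtain rfl | hm := eq_or_ne m 0
  · simp
  have : NeZero m := ⟨hm⟩
  have := C.finite_colors
  have := (C.induce {v}ᶜ).finite_colors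
  have := Fintype.ofFinite {g // (C.induce {v}ᶜ).IsColoring g}
  let extendPair (p : Σ g : {g // (C.induce {v}ᶜ).IsColoring g},
      ↑(C.L v \ C.blockedColors v fun u => (g.1 u).1)) : {f // C.IsColoring f} :=
    ⟨C.extend _ p.2.1, C.isColoring_extend p.1.2 p.2.2⟩
  have extendPair_injective : Function.Injective extendPair := by
    rintro ⟨g, x⟩ ⟨g', x'⟩ h
    have happly (u) := congrFun (congrArg Subtype.val h) u
    obtain rfl : g = g' := by
      refine Subtype.ext (funext fun ⟨u, hu⟩ => Subtype.ext ?_)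
      simpa only [extendPair, extend_of_ne _ _ _ hu] using happly u
    obtain rfl : x = x' := Subtype.ext (by simpa only [extendPair, extend_self] using happly v)
    rfl
  calc (C.induce {v}ᶜ).count * (m - G.degree v)
      = ∑ _g : {g // (C.induce {v}ᶜ).IsColoring g}, (m - G.degree v) := by
        rw [Finset.sum_const, Finset.card_univ, ← Nat.card_eq_fintype_card, smul_eq_mul, count]
    _ ≤ ∑ g : {g // (C.induce {v}ᶜ).IsColoring g},
          Nat.card ↑(C.L v \ C.blockedColors v fun u => (g.1 u).1) :=
        Finset.sum_le_sum fun g _ => C.sub_degree_le_ncard_diff_blockedColors g.2.1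
    _ ≤ C.count := by
        rw [← Nat.card_sigma]
        exact Nat.card_le_card_of_injective extendPair extendPair_injective

theorem count_of_unique [Unique V] : C.count = m := by
  let e : {f // C.IsColoring f} ≃ C.L default :=
    { toFun f := ⟨f.1 default, f.2.1 default⟩
      invFun x := ⟨fun _ => x, fun v => Unique.eq_default v ▸ x.2,
        fun u v huv => absurd (Subsingleton.elim u v) huv⟩
      left_inv f := Subtype.ext (funext fun v => congrArg f.1 (Unique.default_eq v))
      right_inv _ := rfl }
  exact (Nat.card_congr e).trans (C.fold default)

end Restriction

theorem mul_pow_le_count_of_isTree {V : Type} {G : SimpleGraph V} {m n : ℕ} (hG : G.IsTree)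
    (hn : Nat.card V = n + 1) (C : DPCover G m) :
    m * (m - 1) ^ n ≤ C.count := by
  classical
  have : Finite V := Nat.finite_of_card_ne_zero (by lia)
  have := Fintype.ofFinite V
  induction n generalizing V with
  | zero =>
    obtain ⟨_, ⟨v⟩⟩ := Nat.card_eq_one_iff_unique.1 hn
    have := uniqueOfSubsingleton v
    rw [pow_zero, mul_one, C.count_of_unique]
  | succ n ih =>
    have : Nontrivial V := Finite.one_lt_card_iff_nontrivial.1 (by lia)
    obtain ⟨v, hv⟩ := hG.exists_vert_degree_one_of_nontrivial
    have hcard : Nat.card ({v}ᶜ : Set V) = n + 1 := by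
      rw [Nat.card_coe_set_eq, Set.ncard_compl, Set.ncard_singleton, hn, Nat.add_sub_cancel]
    have hdelete : (G.induce ({v}ᶜ : Set V)).IsTree :=
      ⟨hG.connected.induce_compl_singleton_of_degree_eq_one hv, hG.isAcyclic.induce _⟩
    calc m * (m - 1) ^ (n + 1) = m * (m - 1) ^ n * (m - 1) := by rw [pow_succ, mul_assoc]
      _ ≤ (C.induce {v}ᶜ).count * (m - 1) :=
          Nat.mul_le_mul_right _ (ih hdelete hcard _ inferInstance inferInstance)
      _ ≤ C.count := hv ▸ C.count_induce_compl_mul_le_count v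

section SumCover

variable {V A : Type} [AddCommGroup A] (G : SimpleGraph V)

/-- The cover of `G` with a copy of `A` as the list of every vertex, in which colors `a` and `b` at
the ends of an edge `e` conflict when `a + b = σ e`. Using a sum rather than a difference makes
this relation symmetric, so that no orientation of the edges is needed. -/
def sumCover (σ : G.edgeSet → A) : DPCover G (Nat.card A) where
  X := V × A
  H :=
    { Adj x y := (x.1 = y.1 ∧ x.2 ≠ y.2) ∨
        ∃ e : G.edgeSet, (e : Sym2 V) = s(x.1, y.1) ∧ x.2 + y.2 = σ e
      symm := ⟨fun x y => Or.imp (fun h => ⟨h.1.symm, h.2.symm⟩)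
        fun ⟨e, he, h⟩ => ⟨e, he.trans Sym2.eq_swap, (add_comm _ _).trans h⟩⟩
      loopless := ⟨fun x => by
        rintro (h | ⟨e, he, -⟩)
        · exact h.2 rfl
        · exact G.loopless.irrefl x.1 (G.mem_edgeSet.1 (he ▸ e.2))⟩ }
  L v := {x | x.1 = v}
  partition x := ⟨x.1, rfl, fun _ h => h.symm⟩
  fold v := Nat.card_congr
    { toFun x := x.1.2
      invFun a := ⟨(v, a), rfl⟩
      left_inv := by rintro ⟨⟨_, a⟩, rfl⟩; rfl
      right_inv _ := rfl }
  cliques := by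
    rintro v ⟨_, a⟩ rfl ⟨_, b⟩ rfl hab
    exact Or.inl ⟨rfl, fun h => hab (Prod.ext rfl h)⟩
  cross := by
    rintro _ _ x rfl y rfl (h | ⟨e, he, -⟩)
    · exact Or.inl h.1
    · exact Or.inr (G.mem_edgeSet.1 (he ▸ e.2))
  matching := by
    rintro _ _ huv x rfl y rfl z hz h h'
    obtain ⟨e, he, h⟩ := h.resolve_left fun h => G.ne_of_adj huv h.1
    obtain ⟨e', he', h'⟩ := h'.resolve_left fun h' => G.ne_of_adj huv (h'.1.trans hz)
    obtain rfl : e = e' := Subtype.ext (by rw [he, he', hz])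
    exact Prod.ext hz.symm (add_left_cancel (h.trans h'.symm))
  matching' := by
    rintro _ _ huv y rfl z hz x rfl h h'
    obtain ⟨e, he, h⟩ := h.resolve_left fun h => G.ne_of_adj huv h.1
    obtain ⟨e', he', h'⟩ := h'.resolve_left fun h' => G.ne_of_adj huv (hz.symm.trans h'.1)
    obtain rfl : e = e' := Subtype.ext (by rw [he, he', hz])
    exact Prod.ext hz.symm (add_right_cancel (h.trans h'.symm))

/-- The sum of the values of `c` at the two ends of an edge. -/
def endSum (c : V → A) : Sym2 V → A :=
  Sym2.lift ⟨fun u v => c u + c v, fun _ _ => add_comm _ _⟩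

variable {G}

/-- The colorings of `sumCover G σ` are the maps `V → A` whose sum along every edge `e` differs
from `σ e`. -/
def sumCoverColoringEquiv (σ : G.edgeSet → A) :
    {f // (sumCover G σ).IsColoring f} ≃
      {c : V → A // ∀ e : G.edgeSet, σ e ≠ endSum c e} where
  toFun f := ⟨fun v => (f.1 v).2, by
    rintro ⟨e, he⟩ h
    induction e with
    | _ u v =>
      refine f.2.2 u v (G.ne_of_adj he) (Or.inr ⟨⟨s(u, v), he⟩, ?_, h.symm⟩)
      rw [f.2.1 u, f.2.1 v]⟩
  invFun c := ⟨fun v => (v, c.1 v), fun _ => rfl, by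
    rintro u v huv (h | ⟨e, he, h⟩)
    · exact huv h.1
    · exact c.2 e (by rw [he]; exact h.symm)⟩
  left_inv f := Subtype.ext (funext fun v => Prod.ext (f.2.1 v).symm rfl)
  right_inv _ := rfl

variable (G)

theorem card_sigma_isColoring_sumCover [Finite V] [Finite A] :
    Nat.card (Σ σ : G.edgeSet → A, {f // (sumCover G σ).IsColoring f}) =
      Nat.card A ^ Nat.card V * (Nat.card A - 1) ^ Nat.card G.edgeSet := by
  have := Fintype.ofFinite (V → A)
  calc Nat.card (Σ σ : G.edgeSet → A, {f // (sumCover G σ).IsColoring f})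
      = Nat.card (Σ σ : G.edgeSet → A, {c : V → A // ∀ e : G.edgeSet, σ e ≠ endSum c e}) :=
        Nat.card_congr (Equiv.sigmaCongrRight sumCoverColoringEquiv)
    _ = Nat.card (Σ c : V → A, {σ : G.edgeSet → A // ∀ e : G.edgeSet, σ e ≠ endSum c e}) :=
        Nat.card_congr
          ⟨fun p => ⟨p.2.1, p.1, p.2.2⟩, fun p => ⟨p.2.1, p.1, p.2.2⟩, fun _ => rfl, fun _ => rfl⟩
    _ = ∑ _c : V → A, (Nat.card A - 1) ^ Nat.card G.edgeSet := by
        rw [Nat.card_sigma]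
        exact Finset.sum_congr rfl fun c _ => natCard_forall_ne fun e : G.edgeSet => endSum c e
    _ = Nat.card A ^ Nat.card V * (Nat.card A - 1) ^ Nat.card G.edgeSet := by
        rw [Finset.sum_const, Finset.card_univ, ← Nat.card_eq_fintype_card, Nat.card_fun,
          smul_eq_mul]

end SumCover

end DPCover

theorem PDP_le_count {V : Type} {G : SimpleGraph V} {m : ℕ} (C : DPCover G m) :
    PDP G m ≤ C.count :=
  Nat.sInf_le ⟨C, rfl⟩

theorem exists_count_eq_PDP {V : Type} (G : SimpleGraph V) (m : ℕ) :
    ∃ C : DPCover G m, C.count = PDP G m := by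
  obtain ⟨C⟩ : Nonempty (DPCover G m) := by
    rw [← Nat.card_zmod m]
    exact ⟨DPCover.sumCover G (0 : G.edgeSet → ZMod m)⟩
  exact Nat.sInf_mem (s := {n | ∃ C : DPCover G m, C.count = n}) ⟨C.count, C, rfl⟩

theorem PDP_zero {V : Type} [Nonempty V] (G : SimpleGraph V) : PDP G 0 = 0 := by
  let C : DPCover G 0 :=
    { X := Empty
      H := ⊥
      L _ := ∅
      partition := nofun
      fold := by simp
      cliques := nofun
      cross := nofun
      matching := nofun
      matching' := nofun }
  have : IsEmpty {f // C.IsColoring f} := ⟨fun f => (f.1 (Classical.arbitrary V)).elim⟩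
  exact Nat.le_zero.1 ((PDP_le_count C).trans_eq Nat.card_of_isEmpty)

theorem PDP_card_mul_pow_le {V : Type} [Finite V] (G : SimpleGraph V) (A : Type) [AddCommGroup A]
    [Finite A] :
    PDP G (Nat.card A) * Nat.card A ^ Nat.card G.edgeSet ≤
      Nat.card A ^ Nat.card V * (Nat.card A - 1) ^ Nat.card G.edgeSet := by
  have := Fintype.ofFinite (G.edgeSet → A)
  have : NeZero (Nat.card A) := ⟨Nat.card_pos.ne'⟩
  have (σ : G.edgeSet → A) := (DPCover.sumCover G σ).finite_colors
  calc PDP G (Nat.card A) * Nat.card A ^ Nat.card G.edgeSet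
      = ∑ _σ : G.edgeSet → A, PDP G (Nat.card A) := by
        rw [Finset.sum_const, Finset.card_univ, ← Nat.card_eq_fintype_card, Nat.card_fun,
          smul_eq_mul, mul_comm]
    _ ≤ ∑ σ : G.edgeSet → A, (DPCover.sumCover G σ).count :=
        Finset.sum_le_sum fun σ _ => PDP_le_count _
    _ = Nat.card A ^ Nat.card V * (Nat.card A - 1) ^ Nat.card G.edgeSet :=
        Nat.card_sigma.symm.trans (DPCover.card_sigma_isColoring_sumCover G)

section Bounds

variable {V : Type} {G : SimpleGraph V} {m n : ℕ}

theorem PDP_mul_pow_le_of_card_edgeSet_eq [NeZero m] {r : ℕ} (hn : Nat.card V = n + 1)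
    (hr : Nat.card G.edgeSet = n + r) :
    PDP G m * m ^ r ≤ m * (m - 1) ^ n * (m - 1) ^ r := by
  have : Finite V := Nat.finite_of_card_ne_zero (by lia)
  have h := PDP_card_mul_pow_le G (ZMod m)
  rw [Nat.card_zmod, hn, hr] at h
  refine Nat.le_of_mul_le_mul_right ?_ (pow_pos (NeZero.pos m) n)
  calc PDP G m * m ^ r * m ^ n = PDP G m * m ^ (n + r) := by ring
    _ ≤ m ^ (n + 1) * (m - 1) ^ (n + r) := h
    _ = m * (m - 1) ^ n * (m - 1) ^ r * m ^ n := by ring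

theorem PDP_le_mul_pow_of_le_card_edgeSet (hn : Nat.card V = n + 1)
    (hE : n ≤ Nat.card G.edgeSet) : PDP G m ≤ m * (m - 1) ^ n := by
  obtain rfl | hm := m.eq_zero_or_pos
  · have : Nonempty V := (Nat.card_pos_iff.1 (by lia)).1
    rw [PDP_zero]
    exact Nat.zero_le _
  have : NeZero m := ⟨hm.ne'⟩
  obtain ⟨r, hr⟩ := Nat.exists_eq_add_of_le hE
  refine Nat.le_of_mul_le_mul_right ?_ (pow_pos hm r)
  exact (PDP_mul_pow_le_of_card_edgeSet_eq hn hr).trans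
    (Nat.mul_le_mul_left _ (Nat.pow_le_pow_left (Nat.sub_le m 1) r))

theorem PDP_lt_mul_pow_of_lt_card_edgeSet (hn : Nat.card V = n + 1)
    (hE : n < Nat.card G.edgeSet) (hm : 2 ≤ m) : PDP G m < m * (m - 1) ^ n := by
  have : NeZero m := ⟨by lia⟩
  obtain ⟨r, hr⟩ := Nat.exists_eq_add_of_le hE.le
  refine Nat.lt_of_mul_lt_mul_right (a := m ^ r)
    ((PDP_mul_pow_le_of_card_edgeSet_eq hn hr).trans_lt ?_)
  have hpos : 0 < m * (m - 1) ^ n := Nat.mul_pos (by lia) (Nat.pow_pos (by lia))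
  exact Nat.mul_lt_mul_of_pos_left (Nat.pow_lt_pow_left (by lia) (by lia)) hpos

theorem PDP_le_mul_pow_of_connected (hG : G.Connected) (hn : Nat.card V = n + 1) :
    PDP G m ≤ m * (m - 1) ^ n := by
  have := hG.card_vert_le_card_edgeSet_add_one
  exact PDP_le_mul_pow_of_le_card_edgeSet hn (by lia)

theorem mul_pow_le_PDP_of_isTree (hG : G.IsTree) (hn : Nat.card V = n + 1) :
    m * (m - 1) ^ n ≤ PDP G m := by
  obtain ⟨C, hC⟩ := exists_count_eq_PDP G m
  exact hC ▸ C.mul_pow_le_count_of_isTree hG hn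

theorem PDP_eq_mul_pow_iff_isTree (hG : G.Connected) (hn : Nat.card V = n + 1) (hm : 2 ≤ m) :
    PDP G m = m * (m - 1) ^ n ↔ G.IsTree := by
  have : Finite V := Nat.finite_of_card_ne_zero (by lia)
  refine ⟨fun h => isTree_iff_connected_and_card.2 ⟨hG, ?_⟩, fun hT =>
    (PDP_le_mul_pow_of_connected hG hn).antisymm (mul_pow_le_PDP_of_isTree hT hn)⟩
  have hedges : Nat.card G.edgeSet ≤ n :=
    le_of_not_gt fun hcycle => (PDP_lt_mul_pow_of_lt_card_edgeSet hn hcycle hm).ne h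
  have := hG.card_vert_le_card_edgeSet_add_one
  lia

end Bounds

theorem stmt_9 {V : Type} [Fintype V] (G : SimpleGraph V) (hG : G.Connected)
    (n : ℕ) (hn : Fintype.card V = n) :
    (∀ m : ℕ, (PDP G m : ℤ) ≤ (m : ℤ) * ((m : ℤ) - 1) ^ (n - 1)) ∧
    (∀ m : ℕ, 2 ≤ m →
      ((PDP G m : ℤ) = (m : ℤ) * ((m : ℤ) - 1) ^ (n - 1) ↔ G.IsTree)) := by
  have := hG.nonempty
  have hcard : Nat.card V = n - 1 + 1 := by
    rw [Nat.sub_add_cancel (hn ▸ Fintype.card_pos), Nat.card_eq_fintype_card, hn]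
  have hcast (m : ℕ) :
      (m : ℤ) * ((m : ℤ) - 1) ^ (n - 1) = (m * (m - 1) ^ (n - 1) : ℕ) := by
    cases m <;> simp
  simp only [hcast, Nat.cast_le, Nat.cast_inj]
  exact ⟨fun _ => PDP_le_mul_pow_of_connected hG hcard,
    fun _ hm => PDP_eq_mul_pow_iff_isTree hG hcard hm⟩
end
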